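/- arXiv:2602.23162 — 2 statements merged into one kernel-verified Lean document; each statement's English description precedes it below -/
import Mathlib

section
/- Let (X,d) be a metric space and R ⊆ C([0,∞); X) satisfy (K1)–(K4). Then a map γ : ℝ → X is a complete trajectory of R (i.e. γ(·+h)|_{[0,∞)} ∈ R for every h ∈ ℝ) if and only if γ is continuous and is a complete trajectory of G, i.e. γ(t+s) ∈ G(t,γ(s)) for all s ∈ ℝ and t ≥ 0. -/
open scoped NNReal
open Filter

/-- The multivalued map associated with a family `R` of trajectories:
`G(t,x) = {φ(t) : φ ∈ R, φ(0) = x}`. -/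
def msemiflowOf {X : Type*} (R : Set (ℝ≥0 → X)) (t : ℝ≥0) (x : X) : Set X :=
  {y | ∃ φ ∈ R, φ 0 = x ∧ φ t = y}

/-!
If `γ` is a complete trajectory of `G`, then for a step `δ` each piece of `γ` between consecutive
multiples of `δ` is matched at its endpoints by an element of `R`, and (K3) glues finitely many of
these into an element of `R` agreeing with `γ` on a finite grid. Every nonnegative rational lies on
the grid of step `1 / n!` in `[0, n]` for all large `n`, so a limit in `R` provided by (K4) agrees
with `γ` at all rational times, hence everywhere by continuity.
-/

theorem denseRange_nnratCast_nnreal : DenseRange ((↑) : ℚ≥0 → ℝ≥0) := by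
  refine dense_of_exists_between fun a b hab => ?_
  obtain ⟨q, hq, haq, hqb⟩ := (NNReal.lt_iff_exists_rat_btwn a b).1 hab
  lift q to ℚ≥0 using hq
  have hcast : Real.toNNReal (q : ℚ) = (q : ℝ≥0) :=
    NNReal.eq (Real.coe_toNNReal _ (by positivity))
  exact ⟨q, Set.mem_range_self q, hcast ▸ haq, hcast ▸ hqb⟩

theorem exists_nat_eq_mul_inv_factorial {q : ℚ≥0} {n : ℕ} (hden : q.den ≤ n) (hq : q ≤ n) :
    ∃ k ≤ n * n.factorial, q = k * (n.factorial : ℚ≥0)⁻¹ := by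
  obtain ⟨m, hm⟩ := Nat.dvd_factorial q.den_pos hden
  have hk : ((q.num * m : ℕ) : ℚ≥0) = q * n.factorial := by
    rw [hm, Nat.cast_mul, Nat.cast_mul, ← mul_assoc, NNRat.mul_den_eq_num]
  refine ⟨q.num * m, ?_, ?_⟩
  · have : ((q.num * m : ℕ) : ℚ≥0) ≤ n * n.factorial := hk.trans_le (by gcongr)
    exact_mod_cast this
  · rw [hk, mul_inv_cancel_right₀ (by positivity)]

section Continuity

variable {X : Type*} [TopologicalSpace X]

theorem continuous_of_forall_continuous_nnreal_add {γ : ℝ → X}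
    (hγ : ∀ h : ℝ, Continuous fun t : ℝ≥0 => γ (t + h)) : Continuous γ := by
  refine continuous_iff_continuousAt.2 fun x => ?_
  have hcont : Continuous fun y : ℝ => γ ((y - (x - 1)).toNNReal + (x - 1)) :=
    (hγ (x - 1)).comp (continuous_real_toNNReal.comp (continuous_id.sub continuous_const))
  refine hcont.continuousAt.congr ?_
  filter_upwards [lt_mem_nhds (sub_one_lt x)] with y hy
  rw [Real.coe_toNNReal _ (sub_nonneg.2 hy.le), sub_add_cancel]

theorem isSeqCompact_setOf_apply_zero_eq [T2Space X] {R : Set (ℝ≥0 → X)}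
    (hR : ∀ (φ : ℕ → ℝ≥0 → X) (x₀ : X), (∀ n, φ n ∈ R) →
      Tendsto (fun n => φ n 0) atTop (nhds x₀) →
      ∃ ψ : ℕ → ℕ, StrictMono ψ ∧ ∃ φ' ∈ R,
        ∀ t : ℝ≥0, Tendsto (fun k => φ (ψ k) t) atTop (nhds (φ' t)))
    (x : X) : IsSeqCompact {φ ∈ R | φ 0 = x} := by
  intro φ hφ
  have hφ0 : ∀ n, φ n 0 = x := fun n => (hφ n).2
  obtain ⟨ψ, hψ, φ', hφ', hlim⟩ := hR φ x (fun n => (hφ n).1) (by simp [hφ0])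
  have hφ'0 : φ' 0 = x := tendsto_nhds_unique (hlim 0) (by simp [hφ0])
  exact ⟨φ', ⟨hφ', hφ'0⟩, ψ, hψ, tendsto_pi_nhds.2 hlim⟩

end Continuity

section Trajectories

variable {X : Type*}

/-- The concatenation of `φ₁` and `φ₂` at time `s`: follow `φ₁` up to time `s`, then `φ₂` with its
clock restarted. The truncated subtraction `t - s` occurs only for `s < t`. -/
noncomputable def concatAt (s : ℝ≥0) (φ₁ φ₂ : ℝ≥0 → X) : ℝ≥0 → X :=
  fun t => if t ≤ s then φ₁ t else φ₂ (t - s)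

theorem concatAt_zero (s : ℝ≥0) (φ₁ φ₂ : ℝ≥0 → X) : concatAt s φ₁ φ₂ 0 = φ₁ 0 :=
  if_pos zero_le

theorem concatAt_add {s : ℝ≥0} {φ₁ φ₂ : ℝ≥0 → X} (h : φ₂ 0 = φ₁ s) (t : ℝ≥0) :
    concatAt s φ₁ φ₂ (t + s) = φ₂ t := by
  rcases eq_zero_or_pos t with rfl | ht
  · simp [concatAt, h]
  · simp [concatAt, ht.ne']

/-- Condition (K3): matching elements of `R` may be concatenated at any positive time. -/
def IsConcatClosed (R : Set (ℝ≥0 → X)) : Prop :=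
  ∀ φ₁ ∈ R, ∀ φ₂ ∈ R, ∀ s : ℝ≥0, 0 < s → φ₂ 0 = φ₁ s → concatAt s φ₁ φ₂ ∈ R

/-- `γ : [0, ∞) → X` is a trajectory of the multivalued map `G`; this is the half-line counterpart
of a complete trajectory. -/
def IsForwardTrajectory (G : ℝ≥0 → X → Set X) (γ : ℝ≥0 → X) : Prop :=
  ∀ s t : ℝ≥0, γ (t + s) ∈ G t (γ s)

theorem IsForwardTrajectory.comp_add_right {G : ℝ≥0 → X → Set X} {γ : ℝ≥0 → X}
    (hγ : IsForwardTrajectory G γ) (τ : ℝ≥0) : IsForwardTrajectory G fun t => γ (t + τ) :=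
  fun s t => by simpa only [add_assoc] using hγ (s + τ) t

variable {R : Set (ℝ≥0 → X)}

theorem IsConcatClosed.exists_mem_forall_nat_mul_eq (hR : IsConcatClosed R) {δ : ℝ≥0} (hδ : 0 < δ)
    (N : ℕ) {γ : ℝ≥0 → X} (hγ : IsForwardTrajectory (msemiflowOf R) γ) :
    ∃ φ ∈ R, ∀ k ≤ N, φ (k * δ) = γ (k * δ) := by
  induction N generalizing γ with
  | zero =>
    obtain ⟨φ, hφ, hφ0, -⟩ := hγ 0 0
    refine ⟨φ, hφ, fun k hk => ?_⟩
    simpa [Nat.le_zero.1 hk] using hφ0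
  | succ N ih =>
    obtain ⟨φ₁, hφ₁, hφ₁0, hφ₁δ⟩ := hγ 0 δ
    obtain ⟨φ₂, hφ₂, hφ₂γ⟩ := ih (hγ.comp_add_right δ)
    have hmatch : φ₂ 0 = φ₁ δ := by simpa [hφ₁δ] using hφ₂γ 0 N.zero_le
    refine ⟨concatAt δ φ₁ φ₂, hR φ₁ hφ₁ φ₂ hφ₂ δ hδ hmatch, fun k hk => ?_⟩
    cases k with
    | zero => simpa [concatAt_zero] using hφ₁0
    | succ k =>
      rw [Nat.cast_succ, add_one_mul, concatAt_add hmatch, hφ₂γ k (Nat.le_of_succ_le_succ hk)]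

theorem IsConcatClosed.exists_seq_eventually_nnrat_eq (hR : IsConcatClosed R) {γ : ℝ≥0 → X}
    (hγ : IsForwardTrajectory (msemiflowOf R) γ) :
    ∃ φ : ℕ → ℝ≥0 → X, (∀ n, φ n ∈ {φ ∈ R | φ 0 = γ 0}) ∧
      ∀ q : ℚ≥0, ∀ᶠ n in atTop, φ n q = γ q := by
  have hgrid (n : ℕ) := hR.exists_mem_forall_nat_mul_eq
    (δ := (n.factorial : ℝ≥0)⁻¹) (by positivity) (n * n.factorial) hγ
  choose φ hφR hφγ using hgrid
  refine ⟨φ, fun n => ⟨hφR n, by simpa using hφγ n 0 (Nat.zero_le _)⟩, fun q => ?_⟩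
  filter_upwards [eventually_ge_atTop q.den,
    tendsto_natCast_atTop_atTop.eventually_ge_atTop q] with n hden hq
  obtain ⟨k, hk, rfl⟩ := exists_nat_eq_mul_inv_factorial hden hq
  simpa using hφγ n k hk

theorem IsForwardTrajectory.mem_of_continuous [TopologicalSpace X] [T2Space X] {γ : ℝ≥0 → X}
    (hγ : IsForwardTrajectory (msemiflowOf R) γ) (hγc : Continuous γ)
    (hRc : ∀ φ ∈ R, Continuous φ) (hR : IsConcatClosed R)
    (hcpt : IsSeqCompact {φ ∈ R | φ 0 = γ 0}) : γ ∈ R := by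
  obtain ⟨φ, hφ, hφγ⟩ := hR.exists_seq_eventually_nnrat_eq hγ
  obtain ⟨φ', ⟨hφ', -⟩, ψ, hψ, hlim⟩ := hcpt hφ
  have hrat (q : ℚ≥0) : φ' q = γ q :=
    tendsto_nhds_unique (tendsto_pi_nhds.1 hlim q)
      (tendsto_const_nhds.congr' ((hψ.tendsto_atTop.eventually (hφγ q)).mono fun _ h => h.symm))
  have heq : φ' = γ :=
    denseRange_nnratCast_nnreal.equalizer (hRc φ' hφ') hγc (funext hrat)
  exact heq ▸ hφ'

end Trajectories

theorem statement14_general {X : Type*} [TopologicalSpace X] [T2Space X] (R : Set (ℝ≥0 → X))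
    (hRc : ∀ φ ∈ R, Continuous φ) (hR : IsConcatClosed R)
    (hcpt : ∀ x : X, IsSeqCompact {φ ∈ R | φ 0 = x}) (γ : ℝ → X) :
    (∀ h : ℝ, (fun t : ℝ≥0 => γ ((t : ℝ) + h)) ∈ R) ↔
    (Continuous γ ∧ ∀ (s : ℝ) (t : ℝ≥0), γ ((t : ℝ) + s) ∈ msemiflowOf R t (γ s)) := by
  constructor
  · intro hγ
    exact ⟨continuous_of_forall_continuous_nnreal_add fun h => hRc _ (hγ h),
      fun s t => ⟨_, hγ s, by simp, rfl⟩⟩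
  · rintro ⟨hγc, hγ⟩ h
    have htraj : IsForwardTrajectory (msemiflowOf R) fun t : ℝ≥0 => γ (t + h) :=
      fun s t => by simpa [add_assoc] using hγ (s + h) t
    exact htraj.mem_of_continuous (by fun_prop) hRc hR (hcpt _)

/-- Under (K1)–(K4), a map `γ : ℝ → X` is a complete trajectory of
`R` (i.e. `γ(·+h)|_{[0,∞)} ∈ R` for all `h ∈ ℝ`) iff it is continuous and a
complete trajectory of `G` (i.e. `γ(t+s) ∈ G(t,γ(s))` for all `s ∈ ℝ`, `t ≥ 0`). -/
theorem statement14 {X : Type*} [MetricSpace X] (R : Set (ℝ≥0 → X))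
    (hRc : ∀ φ ∈ R, Continuous φ)
    (hK1 : ∀ x : X, ∃ φ ∈ R, φ 0 = x)
    (hK2 : ∀ φ ∈ R, ∀ τ : ℝ≥0, (fun t => φ (t + τ)) ∈ R)
    (hK3 : ∀ φ₁ ∈ R, ∀ φ₂ ∈ R, ∀ s : ℝ≥0, 0 < s → φ₂ 0 = φ₁ s →
      (fun t => if t ≤ s then φ₁ t else φ₂ (t - s)) ∈ R)
    (hK4 : ∀ (φ : ℕ → ℝ≥0 → X) (x₀ : X), (∀ n, φ n ∈ R) →
      Tendsto (fun n => φ n 0) atTop (nhds x₀) →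
      ∃ ψ : ℕ → ℕ, StrictMono ψ ∧ ∃ φ' ∈ R,
        ∀ t : ℝ≥0, Tendsto (fun k => φ (ψ k) t) atTop (nhds (φ' t)))
    (γ : ℝ → X) :
    (∀ h : ℝ, (fun t : ℝ≥0 => γ ((t : ℝ) + h)) ∈ R) ↔
    (Continuous γ ∧ ∀ (s : ℝ) (t : ℝ≥0), γ ((t : ℝ) + s) ∈ msemiflowOf R t (γ s)) :=
  statement14_general R hRc hK3 (isSeqCompact_setOf_apply_zero_eq hK4) γ
end

section
/- Let (X,d) be a metric space and G a multivalued semiflow on X such that for each t ≥ 0 the map x ↦ G(t,x) is upper semicontinuous with closed values. Suppose there exists a compact set K ⊆ X such that dist_X(G(t,B), K) → 0 as t → +∞ for every bounded set B ⊆ X. Then G possesses a global compact attractor A: a compact set that is negatively invariant (A ⊆ G(t,A) for all t ≥ 0) and attracts every bounded set, and which is the minimal closed set attracting every bounded set. If, moreover, G is strict, then A is invariant: G(t,A) = A for all t ≥ 0. -/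
open scoped NNReal ENNReal
open Filter Bornology

/-- `G(t,B) = ⋃_{y ∈ B} G(t,y)`. -/
def imageSet {X : Type*} (G : ℝ≥0 → X → Set X) (t : ℝ≥0) (B : Set X) : Set X :=
  ⋃ y ∈ B, G t y

/-- The Hausdorff semidistance `dist_X(C,D) = sup_{c ∈ C} inf_{d ∈ D} d(c,d)`
(valued in `ℝ≥0∞`). -/
noncomputable def hausSemidist {X : Type*} [MetricSpace X] (C D : Set X) : ℝ≥0∞ :=
  ⨆ c ∈ C, EMetric.infEdist c D

/-!
The attractor is the closure of the union of the ω-limit sets `ω(B)` of the sets `B` to be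
attracted. Attraction by the compact set `K` makes every sequence `uₙ ∈ G(tₙ, B)` with `tₙ → ∞`
subconverge, necessarily to a point of `ω(B)`; hence `ω(B)` attracts `B`. Splitting
`uₙ ∈ G(r, zₙ)` with `zₙ ∈ G(tₙ - r, B)` and passing to the limit in the closed graph of `G(r, ·)`
gives `ω(B) ⊆ G(r, ω(B))`, and this survives the closure because `G(r, ·)` maps compact sets to
closed sets. In the strict case, negative invariance of the attractor `A` yields
`G(t, A) ⊆ G(t, G(s, A)) = G(t + s, A)` for all `s`, so `G(t, A) ⊆ ω(A) ⊆ A`.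
-/

open scoped Topology

section UpperHemicontinuous

lemma upperHemicontinuous_of_forall_dist {X Y : Type*} [PseudoMetricSpace X] [TopologicalSpace Y]
    {g : X → Set Y}
    (h : ∀ x : X, ∀ O : Set Y, IsOpen O → g x ⊆ O →
      ∃ δ > (0 : ℝ), ∀ y : X, dist y x < δ → g y ⊆ O) :
    UpperHemicontinuous g :=
  .of_forall_isOpen fun x O hO hxO => by
    simpa only [Metric.eventually_nhds_iff] using h x O hO hxO

lemma isClosed_biUnion_of_upperHemicontinuousAt {X Y : Type*} [TopologicalSpace X]
    [TopologicalSpace Y] [RegularSpace Y] {g : X → Set Y} {A : Set X} (hA : IsCompact A)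
    (hg : ∀ x ∈ A, UpperHemicontinuousAt g x) (hclosed : ∀ x ∈ A, IsClosed (g x)) :
    IsClosed (⋃ x ∈ A, g x) := by
  rw [isClosed_iff_ultrafilter]
  intro y 𝒰 h𝒰y h𝒰
  have hpre : ∀ᶠ v in (𝒰 : Filter Y), ∃ x, x ∈ A ∧ v ∈ g x :=
    Filter.mem_of_superset h𝒰 fun v hv => bex_def.1 (Set.mem_iUnion₂.1 hv)
  obtain ⟨z, hz⟩ := hpre.choice
  obtain ⟨w, hwA, hw⟩ := hA.ultrafilter_le_nhds' (𝒰.map z) (hz.mono fun _ hv => hv.1)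
  exact Set.mem_biUnion hwA <| (hg w hwA).mem_of_tendsto (hclosed w hwA) hw
    (hz.mono fun _ hv => hv.2).frequently h𝒰y

end UpperHemicontinuous

section InfEDist

variable {X : Type*}

lemma tendsto_nhdsSet_of_tendsto_infEDist {ι : Type*} [PseudoEMetricSpace X] {l : Filter ι}
    {K : Set X} (hK : IsCompact K) {u : ι → X}
    (hu : Tendsto (fun i => Metric.infEDist (u i) K) l (𝓝 0)) : Tendsto u l (𝓝ˢ K) :=
  (Metric.hasBasis_nhdsSet_thickening hK).tendsto_right_iff.2 fun _ hδ =>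
    hu.eventually_lt_const (ENNReal.ofReal_pos.2 hδ)

lemma exists_mapClusterPt_of_tendsto_nhdsSet {ι : Type*} [TopologicalSpace X] {l : Filter ι}
    [l.NeBot] {K : Set X} (hK : IsCompact K) {u : ι → X} (hu : Tendsto u l (𝓝ˢ K)) :
    ∃ y ∈ K, MapClusterPt y l u := by
  by_contra! h
  have hdisjoint : Disjoint (𝓝ˢ K) (map u l) := hK.disjoint_nhdsSet_left.2 fun y hy =>
    not_not.1 (mt clusterPt_iff_not_disjoint.2 (h y hy))
  exact NeBot.ne inferInstance (disjoint_self.1 (hdisjoint.mono_left hu))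

lemma infEDist_le_hausSemidist [MetricSpace X] {C D : Set X} {c : X} (hc : c ∈ C) :
    Metric.infEDist c D ≤ hausSemidist C D :=
  le_iSup₂ (f := fun c (_ : c ∈ C) => Metric.infEDist c D) c hc

lemma lt_hausSemidist_iff [MetricSpace X] {C D : Set X} {r : ℝ≥0∞} :
    r < hausSemidist C D ↔ ∃ c ∈ C, r < Metric.infEDist c D :=
  lt_biSup_iff

end InfEDist

section ImageSet

variable {X : Type*} {G : ℝ≥0 → X → Set X}

lemma imageSet_mono {A B : Set X} (t : ℝ≥0) (hAB : A ⊆ B) : imageSet G t A ⊆ imageSet G t B :=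
  Set.biUnion_subset_biUnion_left hAB

lemma imageSet_imageSet (t s : ℝ≥0) (B : Set X) :
    imageSet G t (imageSet G s B) = ⋃ x ∈ B, imageSet G t (G s x) := by
  simp only [imageSet, Set.biUnion_iUnion]

lemma imageSet_add_subset (hsemi : ∀ t s x, G (t + s) x ⊆ imageSet G t (G s x))
    (t s : ℝ≥0) (B : Set X) : imageSet G (t + s) B ⊆ imageSet G t (imageSet G s B) := by
  rw [imageSet_imageSet]
  exact Set.iUnion₂_mono fun x _ => hsemi t s x

lemma imageSet_imageSet_subset (hsuper : ∀ t s x, imageSet G t (G s x) ⊆ G (t + s) x)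
    (t s : ℝ≥0) (B : Set X) : imageSet G t (imageSet G s B) ⊆ imageSet G (t + s) B := by
  rw [imageSet_imageSet]
  exact Set.iUnion₂_mono fun x _ => hsuper t s x

end ImageSet

section OmegaLimit

variable {X : Type*} [TopologicalSpace X] {G : ℝ≥0 → X → Set X} {A B : Set X}

/-- The ω-limit set of `B` under `G`: all limits of sequences `uₙ ∈ G(tₙ, B)` with `tₙ → ∞`. -/
def omegaLimitSet (G : ℝ≥0 → X → Set X) (B : Set X) : Set X :=
  {y | ∃ (t : ℕ → ℝ≥0) (u : ℕ → X), Tendsto t atTop atTop ∧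
    (∀ n, u n ∈ imageSet G (t n) B) ∧ Tendsto u atTop (𝓝 y)}

lemma omegaLimitSet_mono (hAB : A ⊆ B) : omegaLimitSet G A ⊆ omegaLimitSet G B := by
  rintro y ⟨t, u, ht, hu, huy⟩
  exact ⟨t, u, ht, fun n => imageSet_mono (t n) hAB (hu n), huy⟩

lemma exists_seq_add_of_mem_omegaLimitSet {y : X} (hy : y ∈ omegaLimitSet G B) (r : ℝ≥0) :
    ∃ (t : ℕ → ℝ≥0) (u : ℕ → X), Tendsto t atTop atTop ∧
      (∀ n, u n ∈ imageSet G (r + t n) B) ∧ Tendsto u atTop (𝓝 y) := by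
  obtain ⟨t, u, ht, hu, huy⟩ := hy
  obtain ⟨N, hN⟩ := eventually_atTop.1 (ht.eventually_ge_atTop r)
  have hshift : Tendsto (fun n => t (n + N)) atTop atTop := (tendsto_add_atTop_iff_nat N).2 ht
  refine ⟨fun n => t (n + N) - r, fun n => u (n + N), ?_, fun n => ?_,
    (tendsto_add_atTop_iff_nat N).2 huy⟩
  · refine tendsto_atTop.2 fun c => ?_
    filter_upwards [hshift.eventually_ge_atTop (c + r)] with n hn
    exact le_tsub_of_add_le_right hn
  · rw [add_tsub_cancel_of_le (hN (n + N) (Nat.le_add_left N n))]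
    exact hu (n + N)

lemma imageSet_subset_omegaLimitSet (hsuper : ∀ t s x, imageSet G t (G s x) ⊆ G (t + s) x)
    (hA : ∀ s, A ⊆ imageSet G s A) (t : ℝ≥0) : imageSet G t A ⊆ omegaLimitSet G A := by
  intro y hy
  refine ⟨fun n => t + n, fun _ => y, ?_, fun n => ?_, tendsto_const_nhds⟩
  · exact tendsto_atTop_mono (fun n => le_add_self) tendsto_natCast_atTop_atTop
  · exact imageSet_imageSet_subset hsuper t n A (imageSet_mono t (hA n) hy)

end OmegaLimit

section Attraction

variable {X : Type*} [MetricSpace X] {G : ℝ≥0 → X → Set X} {B C K : Set X}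

/-- `C` attracts `B` under `G`: `dist_X(G(t, B), C) → 0` as `t → ∞`. -/
def Attracts (G : ℝ≥0 → X → Set X) (B C : Set X) : Prop :=
  Tendsto (fun t : ℝ≥0 => hausSemidist (imageSet G t B) C) atTop (𝓝 0)

lemma attracts_iff_forall_seq :
    Attracts G B C ↔ ∀ (t : ℕ → ℝ≥0) (u : ℕ → X), Tendsto t atTop atTop →
      (∀ n, u n ∈ imageSet G (t n) B) →
      Tendsto (fun n => Metric.infEDist (u n) C) atTop (𝓝 0) := by
  refine ⟨fun h t u ht hu => tendsto_of_tendsto_of_tendsto_of_le_of_le tendsto_const_nhds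
    (h.comp ht) (fun _ => zero_le) fun n => infEDist_le_hausSemidist (hu n), fun h => ?_⟩
  refine ENNReal.tendsto_nhds_zero.2 fun ε hε => ?_
  by_contra hfar
  obtain ⟨t, ht, hlt⟩ := exists_seq_forall_of_frequently (not_eventually.1 hfar)
  have hfarPoint : ∀ n, ∃ x ∈ imageSet G (t n) B, ε < Metric.infEDist x C := fun n =>
    lt_hausSemidist_iff.1 (not_le.1 (hlt n))
  choose u hu hεu using hfarPoint
  obtain ⟨n, hn⟩ := ((h t u ht hu).eventually_lt_const hε).exists
  exact hn.not_gt (hεu n)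

lemma exists_subseq_tendsto_omegaLimitSet (hK : IsCompact K) (hattr : Attracts G B K)
    {t : ℕ → ℝ≥0} {u : ℕ → X} (ht : Tendsto t atTop atTop)
    (hu : ∀ n, u n ∈ imageSet G (t n) B) :
    ∃ y ∈ omegaLimitSet G B, ∃ φ : ℕ → ℕ, StrictMono φ ∧ Tendsto (u ∘ φ) atTop (𝓝 y) := by
  obtain ⟨y, -, hy⟩ := exists_mapClusterPt_of_tendsto_nhdsSet hK
    (tendsto_nhdsSet_of_tendsto_infEDist hK (attracts_iff_forall_seq.1 hattr t u ht hu))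
  obtain ⟨φ, hφ, hlim⟩ := hy.tendsto_subseq
  exact ⟨y, ⟨t ∘ φ, u ∘ φ, ht.comp hφ.tendsto_atTop, fun n => hu (φ n), hlim⟩, φ, hφ, hlim⟩

lemma omegaLimitSet_subset_of_attracts (hC : IsClosed C) (hattr : Attracts G B C) :
    omegaLimitSet G B ⊆ C := by
  rintro y ⟨t, u, ht, hu, huy⟩
  exact (Metric.mem_iff_infEDist_zero_of_closed hC).2 (tendsto_nhds_unique
    ((Metric.continuous_infEDist.tendsto y).comp huy)
    (attracts_iff_forall_seq.1 hattr t u ht hu))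

lemma attracts_of_omegaLimitSet_subset (hK : IsCompact K) (hattr : Attracts G B K)
    (hC : omegaLimitSet G B ⊆ C) : Attracts G B C := by
  refine attracts_iff_forall_seq.2 fun t u ht hu => tendsto_of_subseq_tendsto fun ns hns => ?_
  obtain ⟨y, hy, φ, -, hlim⟩ :=
    exists_subseq_tendsto_omegaLimitSet hK hattr (ht.comp hns) fun n => hu (ns n)
  refine ⟨φ, ?_⟩
  rw [← Metric.infEDist_zero_of_mem (hC hy)]
  exact (Metric.continuous_infEDist.tendsto y).comp hlim

lemma omegaLimitSet_subset_imageSet (hsemi : ∀ t s x, G (t + s) x ⊆ imageSet G t (G s x))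
    {r : ℝ≥0} (husc : UpperHemicontinuous (G r)) (hclosed : ∀ x, IsClosed (G r x))
    (hK : IsCompact K) (hattr : Attracts G B K) :
    omegaLimitSet G B ⊆ imageSet G r (omegaLimitSet G B) := by
  intro y hy
  obtain ⟨t, u, ht, hu, huy⟩ := exists_seq_add_of_mem_omegaLimitSet hy r
  have hsplit : ∀ n, ∃ z ∈ imageSet G (t n) B, u n ∈ G r z := fun n =>
    bex_def.1 (Set.mem_iUnion₂.1 (imageSet_add_subset hsemi r (t n) B (hu n)))
  choose z hz hzu using hsplit
  obtain ⟨w, hw, φ, hφ, hlim⟩ := exists_subseq_tendsto_omegaLimitSet hK hattr ht hz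
  exact Set.mem_biUnion hw <| (husc.upperHemicontinuousAt w).mem_of_tendsto (hclosed w) hlim
    (Frequently.of_forall fun n => hzu (φ n)) (huy.comp hφ.tendsto_atTop)

end Attraction

section Attractor

variable {X : Type*} {G : ℝ≥0 → X → Set X} {𝓑 : Set (Set X)} {B C K : Set X}

/-- The candidate for the global attractor of a family `𝓑` of sets: the closure of the union of
their ω-limit sets. -/
def attractor [TopologicalSpace X] (G : ℝ≥0 → X → Set X) (𝓑 : Set (Set X)) : Set X :=
  closure (⋃ B ∈ 𝓑, omegaLimitSet G B)

lemma omegaLimitSet_subset_attractor [TopologicalSpace X] (hB : B ∈ 𝓑) :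
    omegaLimitSet G B ⊆ attractor G 𝓑 :=
  (Set.subset_biUnion_of_mem (u := fun B => omegaLimitSet G B) hB).trans subset_closure

variable [MetricSpace X]

lemma attractor_subset (hC : IsClosed C) (hattr : ∀ B ∈ 𝓑, Attracts G B C) :
    attractor G 𝓑 ⊆ C :=
  closure_minimal
    (Set.iUnion₂_subset fun B hB => omegaLimitSet_subset_of_attracts hC (hattr B hB)) hC

lemma isCompact_attractor (hK : IsCompact K) (hattr : ∀ B ∈ 𝓑, Attracts G B K) :
    IsCompact (attractor G 𝓑) :=
  hK.of_isClosed_subset isClosed_closure (attractor_subset hK.isClosed hattr)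

lemma attracts_attractor (hK : IsCompact K) (hattr : Attracts G B K) (hB : B ∈ 𝓑) :
    Attracts G B (attractor G 𝓑) :=
  attracts_of_omegaLimitSet_subset hK hattr (omegaLimitSet_subset_attractor hB)

lemma attractor_subset_imageSet (hsemi : ∀ t s x, G (t + s) x ⊆ imageSet G t (G s x))
    {t : ℝ≥0} (husc : UpperHemicontinuous (G t)) (hclosed : ∀ x, IsClosed (G t x))
    (hK : IsCompact K) (hattr : ∀ B ∈ 𝓑, Attracts G B K) :
    attractor G 𝓑 ⊆ imageSet G t (attractor G 𝓑) :=
  closure_minimal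
    (Set.iUnion₂_subset fun B hB =>
      (omegaLimitSet_subset_imageSet hsemi husc hclosed hK (hattr B hB)).trans
        (imageSet_mono t (omegaLimitSet_subset_attractor hB)))
    (isClosed_biUnion_of_upperHemicontinuousAt (isCompact_attractor hK hattr)
      (fun x _ => husc.upperHemicontinuousAt x) fun x _ => hclosed x)

lemma imageSet_attractor_subset (hsuper : ∀ t s x, imageSet G t (G s x) ⊆ G (t + s) x)
    (hneg : ∀ s, attractor G 𝓑 ⊆ imageSet G s (attractor G 𝓑)) (hC : C ∈ 𝓑)
    (hsub : attractor G 𝓑 ⊆ C) (t : ℝ≥0) :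
    imageSet G t (attractor G 𝓑) ⊆ attractor G 𝓑 :=
  (imageSet_subset_omegaLimitSet hsuper hneg t).trans
    ((omegaLimitSet_mono hsub).trans (omegaLimitSet_subset_attractor hC))

theorem statement18_general (hsemi : ∀ t s x, G (t + s) x ⊆ imageSet G t (G s x))
    (husc : ∀ t, UpperHemicontinuous (G t)) (hclosed : ∀ t x, IsClosed (G t x))
    (𝓑 : Set (Set X)) (hK : IsCompact K) (hattr : ∀ B ∈ 𝓑, Attracts G B K) :
    ∃ A : Set X, IsCompact A ∧
      (∀ t, A ⊆ imageSet G t A) ∧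
      (∀ B ∈ 𝓑, Attracts G B A) ∧
      (∀ C, IsClosed C → (∀ B ∈ 𝓑, Attracts G B C) → A ⊆ C) ∧
      (K ∈ 𝓑 → (∀ t s x, G (t + s) x = imageSet G t (G s x)) → ∀ t, imageSet G t A = A) := by
  have hneg : ∀ t, attractor G 𝓑 ⊆ imageSet G t (attractor G 𝓑) := fun t =>
    attractor_subset_imageSet hsemi (husc t) (hclosed t) hK hattr
  refine ⟨attractor G 𝓑, isCompact_attractor hK hattr, hneg,
    fun B hB => attracts_attractor hK (hattr B hB) hB, fun C hC => attractor_subset hC,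
    fun hK𝓑 hstrict t => (imageSet_attractor_subset ?_ hneg hK𝓑 ?_ t).antisymm (hneg t)⟩
  · exact fun t s x => (hstrict t s x).ge
  · exact attractor_subset hK.isClosed hattr

end Attractor

/-- If the multivalued semiflow `G` has, for each `t ≥ 0`, an upper
semicontinuous map `x ↦ G(t,x)` with closed values, and there is a compact set `K`
with `dist_X(G(t,B),K) → 0` for every bounded `B`, then `G` has a global compact
attractor `A`: a compact, negatively invariant set attracting every bounded set,
minimal among closed sets attracting every bounded set; and if `G` is strict then
`A` is invariant. -/
theorem statement18 {X : Type*} [MetricSpace X] (G : ℝ≥0 → X → Set X)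
    (hne : ∀ (t : ℝ≥0) (x : X), (G t x).Nonempty)
    (hG0 : ∀ x : X, G 0 x = {x})
    (hsemi : ∀ (t s : ℝ≥0) (x : X), G (t + s) x ⊆ imageSet G t (G s x))
    (husc : ∀ (t : ℝ≥0) (x : X), ∀ O : Set X, IsOpen O → G t x ⊆ O →
      ∃ δ > (0 : ℝ), ∀ y : X, dist y x < δ → G t y ⊆ O)
    (hclosed : ∀ (t : ℝ≥0) (x : X), IsClosed (G t x))
    (K : Set X) (hKcomp : IsCompact K)
    (hattr : ∀ B : Set X, IsBounded B →
      Tendsto (fun t : ℝ≥0 => hausSemidist (imageSet G t B) K) atTop (nhds 0)) :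
    ∃ A : Set X, IsCompact A ∧
      (∀ t : ℝ≥0, A ⊆ imageSet G t A) ∧
      (∀ B : Set X, IsBounded B →
        Tendsto (fun t : ℝ≥0 => hausSemidist (imageSet G t B) A) atTop (nhds 0)) ∧
      (∀ C : Set X, IsClosed C →
        (∀ B : Set X, IsBounded B →
          Tendsto (fun t : ℝ≥0 => hausSemidist (imageSet G t B) C) atTop (nhds 0)) →
        A ⊆ C) ∧
      ((∀ (t s : ℝ≥0) (x : X), G (t + s) x = imageSet G t (G s x)) →
        ∀ t : ℝ≥0, imageSet G t A = A) := by
  obtain ⟨A, hcompact, hneg, hattracts, hminimal, hinv⟩ :=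
    statement18_general hsemi (fun t => upperHemicontinuous_of_forall_dist (husc t)) hclosed
      {B | IsBounded B} hKcomp hattr
  exact ⟨A, hcompact, hneg, hattracts, hminimal, hinv hKcomp.isBounded⟩
end
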